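/- arXiv:1811.05946 — 3 statements merged into one kernel-verified Lean document; each statement's English description precedes it below -/
import Mathlib

section
/- Let p be an odd prime, let u ∈ SL(2,p) be the matrix with rows (1,1) and (0,1), let π : SL(2,p) → PSL(2,p) be the quotient map, and let H_p be the image under π of the cyclic subgroup generated by u. Then the normalizer of H_p in PSL(2,p) equals the image under π of the subgroup B of SL(2,p) consisting of upper-triangular matrices (matrices whose (2,1) entry is 0). -/
open Matrix
open scoped MatrixGroups

/-!
A surjective homomorphism `f` matches normalizers above and below: the normalizer of `f(H)` is the
image of the normalizer of `H · ker f`. For `H` the group `U` of matrices `[[1, x], [0, 1]]` and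
`ker f` inside the group `B` of upper triangular matrices, the latter normalizer is `B`. Indeed `B`
normalizes `U`, conjugation by a matrix with diagonal `(a, a⁻¹)` acting on `x` as multiplication
by `a²`. Conversely, if `c` is the lower left entry of `g`, then `g [[1, 1], [0, 1]] g⁻¹` has lower
left entry `-c²`, so that `g ∈ B` as soon as this conjugate lies in `U · ker f ≤ B`.
-/

theorem normalizer_map_of_surjective {G N : Type*} [Group G] [Group N] (H : Subgroup G)
    {f : G →* N} (hf : Function.Surjective f) :
    Subgroup.normalizer (H.map f : Set N) =
      (Subgroup.normalizer ((H ⊔ f.ker : Subgroup G) : Set G)).map f := by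
  rw [← Subgroup.comap_map_eq, ← Subgroup.comap_normalizer_eq_of_surjective _ hf,
    Subgroup.map_comap_eq_self_of_surjective hf]

section Transvection

variable {n R : Type*} [DecidableEq n] [Fintype n] [CommRing R] {i j : n}

/-- The homomorphism `x ↦ 1 + x · E_{i,j}` from the additive group of `R` to `SL(n, R)`, used to
obtain the powers of a transvection and the subgroup of matrices `[[1, x], [0, 1]]`. -/
@[simps]
def transvectionHom (R : Type*) [CommRing R] (hij : i ≠ j) :
    Multiplicative R →* SpecialLinearGroup n R where
  toFun x := Matrix.SpecialLinearGroup.transvection hij x.toAdd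
  map_one' := Matrix.SpecialLinearGroup.transvection_coeff_zero hij
  map_mul' x y := Matrix.SpecialLinearGroup.transvection_add hij x.toAdd y.toAdd

theorem transvection_zpow (hij : i ≠ j) (x : R) (k : ℤ) :
    Matrix.SpecialLinearGroup.transvection hij x ^ k =
      Matrix.SpecialLinearGroup.transvection hij (k • x) :=
  (map_zpow (transvectionHom R hij) (Multiplicative.ofAdd x) k).symm

theorem zpowers_transvection_one (hij : i ≠ j) (hR : Function.Surjective (Int.cast : ℤ → R)) :
    Subgroup.zpowers (Matrix.SpecialLinearGroup.transvection hij (1 : R)) =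
      (transvectionHom R hij).range := by
  ext A
  simp only [Subgroup.mem_zpowers_iff, MonoidHom.mem_range, transvection_zpow, zsmul_one,
    transvectionHom_apply, Multiplicative.exists, toAdd_ofAdd, hR.exists]

end Transvection

section SLTwo

variable (R : Type*) [CommRing R]

/-- The subgroup `B` of upper triangular matrices of `SL(2, R)`. -/
def upperTriangularSLTwo : Subgroup SL(2, R) where
  carrier := {A | A 1 0 = 0}
  one_mem' := by simp
  mul_mem' {A B} (hA : A 1 0 = 0) (hB : B 1 0 = 0) := by
    simp [Matrix.mul_apply, Fin.sum_univ_two, hA, hB]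
  inv_mem' {A} (hA : A 1 0 = 0) := by
    simp [Matrix.adjugate_fin_two, hA]

/-- The subgroup `U` of matrices `[[1, x], [0, 1]]` of `SL(2, R)`, whose normalizer is
`upperTriangularSLTwo R` when `R` is reduced. -/
def upperUnitriangularSLTwo : Subgroup SL(2, R) :=
  (transvectionHom R (zero_ne_one' (Fin 2))).range

variable {R}

theorem mem_upperTriangularSLTwo {A : SL(2, R)} : A ∈ upperTriangularSLTwo R ↔ A 1 0 = 0 :=
  Iff.rfl

theorem transvection_mem_upperUnitriangularSLTwo (x : R) :
    Matrix.SpecialLinearGroup.transvection (zero_ne_one' (Fin 2)) x ∈ upperUnitriangularSLTwo R :=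
  ⟨Multiplicative.ofAdd x, rfl⟩

theorem coe_transvection_zero_one (x : R) :
    (Matrix.SpecialLinearGroup.transvection (zero_ne_one' (Fin 2)) x : Matrix (Fin 2) (Fin 2) R) =
      !![1, x; 0, 1] := by
  ext i j
  fin_cases i <;> fin_cases j <;> simp [Matrix.SpecialLinearGroup.transvection_coe]

theorem coe_conj_transvection_zero_one (g : SL(2, R)) (x : R) :
    ((g * Matrix.SpecialLinearGroup.transvection (zero_ne_one' (Fin 2)) x * g⁻¹ : SL(2, R)) :
      Matrix (Fin 2) (Fin 2) R) =
      !![1 - g 0 0 * g 1 0 * x, g 0 0 ^ 2 * x; -(g 1 0 ^ 2 * x), 1 + g 0 0 * g 1 0 * x] := by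
  have hdet : g 0 0 * g 1 1 - g 0 1 * g 1 0 = 1 := by rw [← Matrix.det_fin_two, g.det_coe]
  rw [Matrix.SpecialLinearGroup.coe_mul, Matrix.SpecialLinearGroup.coe_mul,
    Matrix.SpecialLinearGroup.coe_inv, Matrix.adjugate_fin_two, coe_transvection_zero_one]
  nth_rw 1 [Matrix.eta_fin_two g.1]
  rw [Matrix.mul_fin_two, Matrix.mul_fin_two]
  simp only [EmbeddingLike.apply_eq_iff_eq, Matrix.vecCons_inj, and_true]
  grind

theorem upperUnitriangularSLTwo_le_upperTriangularSLTwo :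
    upperUnitriangularSLTwo R ≤ upperTriangularSLTwo R := by
  rintro _ ⟨x, rfl⟩
  simp [mem_upperTriangularSLTwo, coe_transvection_zero_one]

theorem center_le_upperTriangularSLTwo :
    Subgroup.center SL(2, R) ≤ upperTriangularSLTwo R := by
  intro A hA
  obtain ⟨r, -, hr⟩ := Matrix.SpecialLinearGroup.mem_center_iff.1 hA
  simp [mem_upperTriangularSLTwo, ← hr]

theorem upperTriangularSLTwo_le_normalizer :
    upperTriangularSLTwo R ≤ Subgroup.normalizer (upperUnitriangularSLTwo R : Set SL(2, R)) := by
  rw [Subgroup.le_normalizer_iff]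
  rintro g hg _ ⟨x, rfl⟩
  rw [mem_upperTriangularSLTwo] at hg
  refine ⟨Multiplicative.ofAdd (g 0 0 ^ 2 * x.toAdd), Subtype.ext ?_⟩
  rw [transvectionHom_apply, transvectionHom_apply, coe_conj_transvection_zero_one, hg,
    coe_transvection_zero_one, toAdd_ofAdd]
  simp

theorem normalizer_upperUnitriangularSLTwo_sup [IsReduced R] {K : Subgroup SL(2, R)} [K.Normal]
    (hK : K ≤ upperTriangularSLTwo R) :
    Subgroup.normalizer ((upperUnitriangularSLTwo R ⊔ K : Subgroup SL(2, R)) : Set SL(2, R)) =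
      upperTriangularSLTwo R := by
  apply le_antisymm
  · intro g hg
    have hconj : g * Matrix.SpecialLinearGroup.transvection (zero_ne_one' (Fin 2)) 1 * g⁻¹ ∈
        upperTriangularSLTwo R :=
      sup_le upperUnitriangularSLTwo_le_upperTriangularSLTwo hK <|
        (Subgroup.mem_normalizer_iff.1 hg _).1 <|
          Subgroup.mem_sup_left (transvection_mem_upperUnitriangularSLTwo 1)
    rw [mem_upperTriangularSLTwo, coe_conj_transvection_zero_one] at hconj
    simpa [mem_upperTriangularSLTwo] using hconj
  · exact upperTriangularSLTwo_le_normalizer.trans Subgroup.normalizer_le_normalizer_sup_normal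

theorem zpowers_eq_upperUnitriangularSLTwo (hR : Function.Surjective (Int.cast : ℤ → R))
    {u : SL(2, R)} (hu : (u : Matrix (Fin 2) (Fin 2) R) = !![1, 1; 0, 1]) :
    Subgroup.zpowers u = upperUnitriangularSLTwo R := by
  rw [← coe_transvection_zero_one] at hu
  rw [Subtype.ext hu, zpowers_transvection_one _ hR, upperUnitriangularSLTwo]

theorem stmt_4_general [IsReduced R] {G : Type*} [Group G] {f : SL(2, R) →* G}
    (hf : Function.Surjective f) (hker : f.ker ≤ upperTriangularSLTwo R) :
    Subgroup.normalizer ((upperUnitriangularSLTwo R).map f : Set G) =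
      (upperTriangularSLTwo R).map f := by
  rw [normalizer_map_of_surjective _ hf, normalizer_upperUnitriangularSLTwo_sup hker]

end SLTwo

/-- Let `p` be an odd prime, `u = [[1,1],[0,1]] ∈ SL(2,p)`, `π : SL(2,p) → PSL(2,p)`
the quotient by the center, and `H_p = π(⟨u⟩)`. Then the normalizer of `H_p` in
`PSL(2,p)` is the image under `π` of the subgroup `B` of upper-triangular matrices
(those whose `(2,1)` entry vanishes). -/
theorem stmt_4 (p : ℕ) (hp : p.Prime) (hodd : Odd p)
    (u : SpecialLinearGroup (Fin 2) (ZMod p))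
    (hu : (u : Matrix (Fin 2) (Fin 2) (ZMod p)) = !![1, 1; 0, 1])
    (π : SpecialLinearGroup (Fin 2) (ZMod p) →* PSL(2, ZMod p))
    (hπ : π = QuotientGroup.mk' (Subgroup.center (SpecialLinearGroup (Fin 2) (ZMod p))))
    (Hp : Subgroup PSL(2, ZMod p)) (hHp : Hp = (Subgroup.zpowers u).map π)
    (B : Subgroup (SpecialLinearGroup (Fin 2) (ZMod p)))
    (hB : ∀ A : SpecialLinearGroup (Fin 2) (ZMod p),
      A ∈ B ↔ (A : Matrix (Fin 2) (Fin 2) (ZMod p)) 1 0 = 0) :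
    Subgroup.normalizer (Hp : Set PSL(2, ZMod p)) = B.map π := by
  have : Fact p.Prime := ⟨hp⟩
  obtain rfl : B = upperTriangularSLTwo (ZMod p) := Subgroup.ext hB
  rw [hHp, hπ, zpowers_eq_upperUnitriangularSLTwo ZMod.intCast_surjective hu]
  exact stmt_4_general (QuotientGroup.mk'_surjective _)
    ((QuotientGroup.ker_mk' _).trans_le center_le_upperTriangularSLTwo)
end

section
/- Let p be a prime with p ≡ 3 (mod 8) or p ≡ 5 (mod 8), and let P be a Sylow 2-subgroup of PSL(2,p). Then the normalizer of P in PSL(2,p) is isomorphic as a group to the alternating group A₄ on four letters. -/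
open Matrix
open scoped MatrixGroups

/-! Since `8 ∤ |PSL(2, q)|` for `q ≡ 3, 5 (mod 8)`, any subgroup `V` of order `4` is a Sylow
`2`-subgroup. Writing `-1 = a² + b²` in `𝔽_q` splits the Hamilton quaternions: they become the
`2 × 2` matrices over `𝔽_q`, and the units `i`, `j` have determinant `1`. Take for `V` the image
of `{±1, ±i, ±j, ±ij}`. An element of `PSL(2, q)` centralizing `V` commutes up to sign with `i` and
`j`, and after multiplication by a quaternion unit it commutes with both, so it is scalar: `V` is
its own centralizer. The Hurwitz unit `-(1 + i + j + ij) / 2` has order `3` and permutes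
`i, j, ij` cyclically. Thus `|N(V)|` is divisible by `12`, divides `|V| |Aut V|`, which divides
`4 · 4!`, and is not divisible by `8`: it is `12`. A subgroup of order `3` of `N(V)` is not normal,
otherwise it would centralize `V`, so `N(V)` acts faithfully on its four cosets. -/

section GroupTheory

variable {G : Type*} [Group G]

theorem normalCore_eq_bot_of_prime_card {H : Subgroup G} (hH : (Nat.card H).Prime)
    (hnormal : ¬ H.Normal) : H.normalCore = ⊥ := by
  have : Finite H := Nat.finite_of_card_ne_zero hH.ne_zero
  rcases (Nat.dvd_prime hH).1 (Subgroup.card_dvd_of_le H.normalCore_le) with hcard | hcard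
  · exact Subgroup.card_eq_one.1 hcard
  · have hcore : H.normalCore = H := Subgroup.eq_of_le_of_card_ge H.normalCore_le hcard.ge
    exact absurd (hcore ▸ H.normalCore_normal) hnormal

theorem nonempty_mulEquiv_alternatingGroup_of_normalCore_eq_bot {H : Subgroup G} {n : ℕ}
    (hcore : H.normalCore = ⊥) (hindex : H.index = n) (hcard : 2 * Nat.card G = n.factorial) :
    Nonempty (G ≃* alternatingGroup (Fin n)) := by
  have hpos : 0 < Nat.card G := by have := n.factorial_pos; omega
  have : Finite G := Nat.finite_of_card_ne_zero hpos.ne'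
  let e : G ⧸ H ≃ Fin n := Finite.equivFinOfCardEq hindex
  let f : G →* Equiv.Perm (Fin n) :=
    e.permCongrHom.toMonoidHom.comp (MulAction.toPermHom G (G ⧸ H))
  have hf : Function.Injective f := e.permCongrHom.injective.comp <|
    (MonoidHom.ker_eq_bot_iff _).1 (H.normalCore_eq_ker ▸ hcore)
  have hrange : f.range = alternatingGroup (Fin n) := by
    apply Equiv.Perm.eq_alternatingGroup_of_index_eq_two
    have hmul := f.range.card_mul_index
    rw [← Nat.card_congr (MonoidHom.ofInjective hf).toEquiv, Nat.card_perm, Nat.card_fin,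
      ← hcard, mul_comm] at hmul
    exact Nat.eq_of_mul_eq_mul_right hpos hmul
  exact ⟨(MonoidHom.ofInjective hf).trans (MulEquiv.subgroupCongr hrange)⟩

theorem not_normal_of_coprime_card_of_centralizer_le {H V : Subgroup G} [hV : V.Normal]
    (hcent : Subgroup.centralizer (V : Set G) ≤ V) (hco : (Nat.card H).Coprime (Nat.card V))
    (hH : H ≠ ⊥) : ¬ H.Normal := by
  intro hnormal
  have hdisj : Disjoint H V := Subgroup.disjoint_of_coprime_natCard hco
  have hHC : H ≤ Subgroup.centralizer V := fun h hh => Subgroup.mem_centralizer_iff.2 fun v hv =>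
    (Subgroup.commute_of_normal_of_disjoint H V hnormal hV hdisj h v hh hv).symm
  exact hH (disjoint_self.1 (hdisj.mono_right (hHC.trans hcent)))

theorem nonempty_mulEquiv_alternatingGroup_of_card_eq_twelve (hG : Nat.card G = 12)
    {V : Subgroup G} [V.Normal] (hV : Nat.card V = 4)
    (hcent : Subgroup.centralizer (V : Set G) ≤ V) :
    Nonempty (G ≃* alternatingGroup (Fin 4)) := by
  have : Finite G := Nat.finite_of_card_ne_zero (by omega)
  obtain ⟨w, hw⟩ := exists_prime_orderOf_dvd_card' (G := G) 3 (by rw [hG]; norm_num)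
  have hW : Nat.card (Subgroup.zpowers w) = 3 := by rw [Nat.card_zpowers, hw]
  have hnormal : ¬ (Subgroup.zpowers w).Normal := by
    refine not_normal_of_coprime_card_of_centralizer_le hcent (by rw [hW, hV]; norm_num) ?_
    rintro hbot
    rw [hbot, Subgroup.card_bot] at hW
    omega
  have hindex : (Subgroup.zpowers w).index = 4 := by
    have hmul := (Subgroup.zpowers w).card_mul_index
    rw [hW, hG] at hmul
    omega
  exact nonempty_mulEquiv_alternatingGroup_of_normalCore_eq_bot
    (normalCore_eq_bot_of_prime_card (hW ▸ Nat.prime_three) hnormal) hindex (by rw [hG]; rfl)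

theorem card_normalizer_dvd_card_centralizer_mul_card_mulAut (H : Subgroup G) :
    Nat.card (Subgroup.normalizer (H : Set G)) ∣
      Nat.card (Subgroup.centralizer (H : Set G)) * Nat.card (MulAut H) := by
  rw [← H.normalizerMonoidHom.ker.card_mul_index, Subgroup.index_ker, H.normalizerMonoidHom_ker,
    Nat.card_congr (Subgroup.subgroupOfEquivOfLe
      (Subgroup.centralizer_le_normalizer (H : Set G))).toEquiv]
  exact mul_dvd_mul_left _ (Subgroup.card_subgroup_dvd_card _)

theorem card_mulAut_dvd_factorial [Finite G] :
    Nat.card (MulAut G) ∣ (Nat.card G).factorial := by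
  rw [← Nat.card_perm]
  exact Subgroup.card_dvd_of_injective (MulAut.toPerm G) fun _ _ h =>
    MulEquiv.ext (Equiv.congr_fun h)

theorem card_normalizer_eq_twelve {V : Subgroup G} (hV : Nat.card V = 4)
    (hcent : Subgroup.centralizer (V : Set G) ≤ V)
    (h3 : 3 ∣ Nat.card (Subgroup.normalizer (V : Set G))) (h8 : ¬ 8 ∣ Nat.card G) :
    Nat.card (Subgroup.normalizer (V : Set G)) = 12 := by
  have : Finite V := Nat.finite_of_card_ne_zero (by omega)
  have hC : Nat.card (Subgroup.centralizer (V : Set G)) ∣ 4 := hV ▸ Subgroup.card_dvd_of_le hcent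
  have hAut : Nat.card (MulAut V) ∣ Nat.factorial 4 := hV ▸ card_mulAut_dvd_factorial
  have hdvd := (card_normalizer_dvd_card_centralizer_mul_card_mulAut V).trans (mul_dvd_mul hC hAut)
  have h4 : 4 ∣ Nat.card (Subgroup.normalizer (V : Set G)) :=
    hV ▸ Subgroup.card_dvd_of_le Subgroup.le_normalizer
  obtain ⟨k, hk⟩ : 4 * 3 ∣ Nat.card (Subgroup.normalizer (V : Set G)) :=
    Nat.Coprime.mul_dvd_of_dvd_of_dvd (by norm_num) h4 h3
  have hk8 : k ∣ 2 ^ 3 := by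
    rw [hk] at hdvd
    exact Nat.dvd_of_mul_dvd_mul_left (k := 12) (by norm_num) hdvd
  have hodd : ¬ 2 ∣ k := fun h => h8 <| by
    refine Dvd.dvd.trans ?_ (Subgroup.card_subgroup_dvd_card (Subgroup.normalizer (V : Set G)))
    rw [hk]
    omega
  have hk1 : k = 1 := Nat.Coprime.eq_one_of_dvd
    (((Nat.Prime.coprime_iff_not_dvd Nat.prime_two).2 hodd).symm.pow_right 3) hk8
  rw [hk, hk1]

theorem nonempty_normalizer_mulEquiv_alternatingGroup {V : Subgroup G}
    (hV : Nat.card V = 4) (hcent : Subgroup.centralizer (V : Set G) ≤ V)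
    (h3 : 3 ∣ Nat.card (Subgroup.normalizer (V : Set G))) (h8 : ¬ 8 ∣ Nat.card G) :
    Nonempty (Subgroup.normalizer (V : Set G) ≃* alternatingGroup (Fin 4)) := by
  have : (V.subgroupOf (Subgroup.normalizer (V : Set G))).Normal := Subgroup.normal_in_normalizer
  refine nonempty_mulEquiv_alternatingGroup_of_card_eq_twelve
    (card_normalizer_eq_twelve hV hcent h3 h8)
    (V := V.subgroupOf (Subgroup.normalizer (V : Set G))) ?_ fun g hg => hcent ?_
  · rw [Nat.card_congr (Subgroup.subgroupOfEquivOfLe Subgroup.le_normalizer).toEquiv, hV]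
  · exact Subgroup.mem_centralizer_iff.2 fun v hv =>
      congrArg Subtype.val (Subgroup.mem_centralizer_iff.1 hg ⟨v, Subgroup.le_normalizer hv⟩ hv)

theorem nonempty_normalizer_sylow_mulEquiv {p : ℕ} [Fact p.Prime] [Finite (Sylow p G)]
    (P Q : Sylow p G) :
    Nonempty (Subgroup.normalizer ((P : Subgroup G) : Set G) ≃*
      Subgroup.normalizer ((Q : Subgroup G) : Set G)) := by
  obtain ⟨g, rfl⟩ := MulAction.exists_smul_eq G P Q
  exact ⟨((MulAut.conj g).subgroupMap _).trans
    (MulEquiv.subgroupCongr (Subgroup.map_equiv_normalizer_eq (P : Subgroup G) (MulAut.conj g)))⟩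

theorem nonempty_normalizer_sylow_mulEquiv_alternatingGroup {V : Subgroup G}
    (hV : Nat.card V = 4) (hcent : Subgroup.centralizer (V : Set G) ≤ V)
    (h3 : 3 ∣ Nat.card (Subgroup.normalizer (V : Set G))) (h8 : ¬ 8 ∣ Nat.card G)
    (P : Sylow 2 G) :
    Nonempty (Subgroup.normalizer ((P : Subgroup G) : Set G) ≃* alternatingGroup (Fin 4)) := by
  have : Finite G := Nat.finite_of_card_ne_zero fun h0 => h8 (h0 ▸ dvd_zero 8)
  have hindex : ¬ 2 ∣ V.index := fun h => h8 <| by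
    rw [← V.card_mul_index, hV]
    exact mul_dvd_mul_left 4 h
  have hpgroup : IsPGroup 2 V := IsPGroup.of_card (n := 2) hV
  obtain ⟨e⟩ := nonempty_normalizer_sylow_mulEquiv P (hpgroup.toSylow hindex)
  obtain ⟨f⟩ := nonempty_normalizer_mulEquiv_alternatingGroup hV hcent h3 h8
  exact ⟨e.trans f⟩

theorem card_eq_four_of_coe_eq {V : Subgroup G} {x y : G} (hV : (V : Set G) = {1, x, y, x * y})
    (hx : x ≠ 1) (hy : y ≠ 1) (hne : x ≠ y) (hxy : x * y ≠ 1) : Nat.card V = 4 := by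
  classical
  rw [← SetLike.coe_sort_coe, Nat.card_coe_set_eq, hV, Set.ncard_eq_toFinset_card']
  simp [hx.symm, hy.symm, hne, hxy.symm, hx, hy]

theorem three_dvd_card_normalizer {V : Subgroup G} {x y w : G}
    (hV : (V : Set G) = {1, x, y, x * y}) (hne : x ≠ y) (hw : w ^ 3 = 1)
    (hx : SemiconjBy w x y) (hy : SemiconjBy w y (x * y)) :
    3 ∣ Nat.card (Subgroup.normalizer (V : Set G)) := by
  have : Finite V := (hV ▸ Set.toFinite _ : (V : Set G).Finite)
  have hxV : x ∈ V := by rw [← SetLike.mem_coe, hV]; simp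
  have hyV : y ∈ V := by rw [← SetLike.mem_coe, hV]; simp
  have hconj : ∀ g ∈ V, ∃ z ∈ V, SemiconjBy w g z := by
    intro g hg
    rw [← SetLike.mem_coe, hV] at hg
    rcases hg with rfl | rfl | rfl | rfl
    · exact ⟨1, V.one_mem, .one_right w⟩
    · exact ⟨y, hyV, hx⟩
    · exact ⟨x * g, V.mul_mem hxV hyV, hy⟩
    · exact ⟨y * (x * y), V.mul_mem hyV (V.mul_mem hxV hyV), hx.mul_right hy⟩
  have hwN : w ∈ Subgroup.normalizer (V : Set G) := by
    refine Subgroup.mem_normalizer_fintype fun g hg => ?_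
    obtain ⟨z, hz, hgz⟩ := hconj g hg
    rwa [hgz.eq, mul_inv_cancel_right]
  have hw1 : w ≠ 1 := by
    rintro rfl
    exact hne (by simpa using hx.eq)
  have hle : Subgroup.zpowers w ≤ Subgroup.normalizer (V : Set G) :=
    Subgroup.zpowers_le.2 hwN
  rw [← orderOf_eq_prime hw hw1, ← Nat.card_zpowers]
  exact Subgroup.card_dvd_of_le hle

end GroupTheory

theorem exists_commute_mul_of_semiconjBy_neg {M : Type*} [Monoid M] [HasDistribNeg M] {g x y : M}
    (hxy : SemiconjBy x y (-y)) (hgx : SemiconjBy g x x ∨ SemiconjBy g x (-x))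
    (hgy : SemiconjBy g y y ∨ SemiconjBy g y (-y)) :
    ∃ k ∈ ({1, x, y, x * y} : Set M), Commute (g * k) x ∧ Commute (g * k) y := by
  have hyx : SemiconjBy y x (-x) := by
    rw [SemiconjBy, neg_mul, hxy.eq, neg_mul, neg_neg]
  have hxx : SemiconjBy x (-x) (-x) := (Commute.refl x).neg_right
  have neg_left {z : M} (h : SemiconjBy g z (-z)) : SemiconjBy g (-z) z := by
    simpa only [neg_neg] using h.neg_right
  rcases hgx with hgx | hgx <;> rcases hgy with hgy | hgy
  · exact ⟨1, by simp, by rwa [mul_one], by rwa [mul_one]⟩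
  · exact ⟨x, by simp, hgx.mul_left (Commute.refl x), (neg_left hgy).mul_left hxy⟩
  · exact ⟨y, by simp, (neg_left hgx).mul_left hyx, hgy.mul_left (Commute.refl y)⟩
  · exact ⟨x * y, by simp, (neg_left hgx).mul_left (hxx.mul_left hyx),
      (neg_left hgy).mul_left (hxy.mul_left (Commute.refl y))⟩

section SpecialLinearGroup

theorem card_SL_mul_card_units (n R : Type*) [Fintype n] [DecidableEq n] [Nonempty n]
    [CommRing R] : Nat.card (SpecialLinearGroup n R) * Nat.card Rˣ = Nat.card (GL n R) := by
  have hker : (GeneralLinearGroup.det : GL n R →* Rˣ).ker =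
      (SpecialLinearGroup.toGL : SpecialLinearGroup n R →* GL n R).range := by
    ext g
    constructor
    · intro hg
      exact ⟨⟨g, congrArg Units.val hg⟩, Units.ext rfl⟩
    · rintro ⟨A, rfl⟩
      exact Units.ext A.2
  rw [← (GeneralLinearGroup.det : GL n R →* Rˣ).ker.card_mul_index, Subgroup.index_ker,
    MonoidHom.range_eq_top.2 GeneralLinearGroup.det_surjective, Subgroup.card_top, hker,
    Nat.card_congr (MonoidHom.ofInjective SpecialLinearGroup.toGL_injective).toEquiv]

theorem card_SL_two (F : Type*) [Field F] [Finite F] :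
    Nat.card SL(2, F) = Nat.card F * (Nat.card F ^ 2 - 1) := by
  have := Fintype.ofFinite F
  have hq : 0 < Nat.card F - 1 := Nat.sub_pos_of_lt Finite.one_lt_card
  apply Nat.eq_of_mul_eq_mul_right hq
  rw [← Nat.card_units, card_SL_mul_card_units, card_GL_field, Nat.card_units, Fin.prod_univ_two,
    ← Nat.card_eq_fintype_card, Fin.val_zero, Fin.val_one, pow_zero, pow_one,
    show Nat.card F ^ 2 - Nat.card F = Nat.card F * (Nat.card F - 1) by
      rw [Nat.mul_sub, mul_one, sq]]
  ring

variable {R : Type*} [CommRing R]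

theorem one_ne_neg_one_SL_two [NeZero (2 : R)] : (1 : SL(2, R)) ≠ -1 := by
  intro h
  have h00 : (1 : R) = -1 := by simpa using congrArg (fun A : SL(2, R) => A 0 0) h
  exact two_ne_zero (α := R) (by linear_combination h00)

theorem neg_one_mem_center_SL_two : (-1 : SL(2, R)) ∈ Subgroup.center SL(2, R) :=
  Subgroup.mem_center_iff.2 fun B => by rw [mul_neg, neg_mul, mul_one, one_mul]

theorem mk_neg_PSL_two (A : SL(2, R)) : ((-A : SL(2, R)) : PSL(2, R)) = A := by
  rw [← mul_neg_one, QuotientGroup.mk_mul_of_mem A neg_one_mem_center_SL_two]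

variable [IsDomain R]

theorem mem_center_SL_two_iff {A : SL(2, R)} :
    A ∈ Subgroup.center SL(2, R) ↔ A = 1 ∨ A = -1 := by
  constructor
  · intro hA
    obtain ⟨r, hr, hrA⟩ := Matrix.SpecialLinearGroup.mem_center_iff.1 hA
    rw [Fintype.card_fin, sq_eq_one_iff] at hr
    rcases hr with rfl | rfl
    · exact .inl (Subtype.ext (by rw [← hrA, map_one, Matrix.SpecialLinearGroup.coe_one]))
    · exact .inr (Subtype.ext (by
        rw [← hrA, map_neg, map_one, Matrix.SpecialLinearGroup.coe_neg,
          Matrix.SpecialLinearGroup.coe_one]))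
  · rintro (rfl | rfl)
    · exact Subgroup.one_mem _
    · exact neg_one_mem_center_SL_two

theorem mk_PSL_two_eq_iff {A B : SL(2, R)} : (A : PSL(2, R)) = B ↔ A = B ∨ A = -B := by
  rw [eq_comm, QuotientGroup.eq, mem_center_SL_two_iff, inv_mul_eq_one, inv_mul_eq_iff_eq_mul,
    mul_neg, mul_one, eq_comm]

theorem commute_mk_PSL_two_iff {A B : SL(2, R)} :
    Commute (A : PSL(2, R)) B ↔ SemiconjBy A B B ∨ SemiconjBy A B (-B) := by
  rw [Commute, SemiconjBy, ← QuotientGroup.mk_mul, ← QuotientGroup.mk_mul, mk_PSL_two_eq_iff,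
    ← neg_mul, SemiconjBy, SemiconjBy]

theorem mk_ne_mk_of_commute_of_not_commute {A B C : SL(2, R)} (hA : ¬ Commute A C)
    (hB : Commute B C) : (A : PSL(2, R)) ≠ B := by
  rw [Ne, mk_PSL_two_eq_iff]
  rintro (rfl | rfl)
  exacts [hA hB, hA hB.neg_left]

theorem card_center_SL_two [NeZero (2 : R)] : Nat.card (Subgroup.center SL(2, R)) = 2 := by
  have hcoe : (Subgroup.center SL(2, R) : Set SL(2, R)) = {1, -1} :=
    Set.ext fun _ => mem_center_SL_two_iff
  rw [← SetLike.coe_sort_coe, Nat.card_coe_set_eq, hcoe, Set.ncard_pair one_ne_neg_one_SL_two]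

end SpecialLinearGroup

section FiniteField

variable {F : Type*} [Field F] [Finite F]

theorem two_ne_zero_of_odd_card (hF : Odd (Nat.card F)) : (2 : F) ≠ 0 := by
  have := Fintype.ofFinite F
  refine Ring.two_ne_zero fun hchar => ?_
  rw [FiniteField.even_card_iff_char_two, ← Nat.card_eq_fintype_card] at hchar
  exact Nat.not_even_iff_odd.2 hF (Nat.even_iff.2 hchar)

open Polynomial in
theorem exists_sq_add_sq_eq (x : F) : ∃ a b : F, a ^ 2 + b ^ 2 = x := by
  have := Fintype.ofFinite F
  by_cases hchar : ringChar F = 2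
  · obtain ⟨a, rfl⟩ := FiniteField.isSquare_of_char_two hchar x
    exact ⟨a, 0, by ring⟩
  · obtain ⟨a, b, hab⟩ := FiniteField.exists_root_sum_quadratic (f := (X ^ 2 : F[X]))
      (g := X ^ 2 - C x) (degree_X_pow 2) (degree_X_pow_sub_C two_pos x)
      (FiniteField.odd_card_of_char_ne_two hchar)
    refine ⟨a, b, ?_⟩
    simp only [eval_X, eval_pow, eval_sub, eval_C] at hab
    linear_combination hab

end FiniteField

theorem card_PSL_two_mul_two (F : Type*) [Field F] [Finite F] [NeZero (2 : F)] :
    Nat.card PSL(2, F) * 2 = Nat.card F * (Nat.card F ^ 2 - 1) := by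
  rw [← card_SL_two,
    Subgroup.card_eq_card_quotient_mul_card_subgroup (Subgroup.center SL(2, F)),
    card_center_SL_two]

theorem not_eight_dvd_card_PSL_two {F : Type*} [Field F] [Finite F]
    (hF : Nat.card F % 8 = 3 ∨ Nat.card F % 8 = 5) : ¬ 8 ∣ Nat.card PSL(2, F) := by
  have : NeZero (2 : F) := ⟨two_ne_zero_of_odd_card (Nat.odd_iff.2 (by omega))⟩
  have hcard := card_PSL_two_mul_two F
  generalize Nat.card F = q at *
  have hmod : q * (q ^ 2 - 1) % 16 = 8 := by
    have hsq : q ^ 2 % 16 = 9 := by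
      have : q % 16 = 3 ∨ q % 16 = 5 ∨ q % 16 = 11 ∨ q % 16 = 13 := by omega
      rcases this with h | h | h | h <;> simp [Nat.pow_mod, h]
    have hsub : (q ^ 2 - 1) % 16 = 8 := by omega
    rw [Nat.mul_mod, hsub]
    omega
  omega

section Quaternion

variable {R : Type*} [CommRing R] {a b : R}

/-- The quaternion unit `i` as a matrix of determinant `1`. -/
def quatI (R : Type*) [CommRing R] : SL(2, R) := ⟨!![0, 1; -1, 0], by simp⟩

/-- The quaternion unit `j` as a matrix of determinant `1`, over a ring in which `-1` is given as a
sum of two squares. -/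
def quatJ (hab : a ^ 2 + b ^ 2 = -1) : SL(2, R) :=
  ⟨!![a, b; b, -a], by rw [det_fin_two_of]; linear_combination -hab⟩

variable (hab : a ^ 2 + b ^ 2 = -1)

theorem coe_quatI : (quatI R : Matrix (Fin 2) (Fin 2) R) = !![0, 1; -1, 0] := rfl

theorem coe_quatJ : (quatJ hab : Matrix (Fin 2) (Fin 2) R) = !![a, b; b, -a] := rfl

theorem quatI_mul_self : quatI R * quatI R = -1 := by
  ext i j
  fin_cases i <;> fin_cases j <;> simp [coe_quatI]

theorem quatJ_mul_self : quatJ hab * quatJ hab = -1 := by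
  refine Subtype.ext ?_
  simp only [Matrix.SpecialLinearGroup.coe_mul, Matrix.SpecialLinearGroup.coe_neg,
    Matrix.SpecialLinearGroup.coe_one, coe_quatJ, mul_fin_two, one_fin_two, neg_of, neg_cons,
    neg_empty]
  congrm !![?_, ?_; ?_, ?_] <;> grind

theorem semiconjBy_quatI_quatJ : SemiconjBy (quatI R) (quatJ hab) (-quatJ hab) := by
  ext i j
  fin_cases i <;> fin_cases j <;> simp [coe_quatI, coe_quatJ]

theorem not_commute_quatI_quatJ [NeZero (2 : R)] : ¬ Commute (quatI R) (quatJ hab) := by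
  intro h
  have hIJ : 1 * (quatJ hab * quatI R) = -1 * (quatJ hab * quatI R) := by
    rw [one_mul, neg_one_mul, ← neg_mul, ← (semiconjBy_quatI_quatJ hab).eq, h.eq]
  exact one_ne_neg_one_SL_two (mul_right_cancel hIJ)

theorem eq_one_or_eq_neg_one_of_commute_quat [IsDomain R] [NeZero (2 : R)] {A : SL(2, R)}
    (hI : Commute A (quatI R)) (hJ : Commute A (quatJ hab)) : A = 1 ∨ A = -1 := by
  have hI' := congrArg (fun B : SL(2, R) => (B : Matrix (Fin 2) (Fin 2) R)) hI.eq
  have hJ' := congrArg (fun B : SL(2, R) => (B : Matrix (Fin 2) (Fin 2) R)) hJ.eq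
  have h10 : -A 0 1 = A 1 0 := by
    simpa [coe_quatI, mul_apply, Fin.sum_univ_two] using congrFun₂ hI' 0 0
  have h11 : A 0 0 = A 1 1 := by
    simpa [coe_quatI, mul_apply, Fin.sum_univ_two] using congrFun₂ hI' 0 1
  have hJ00 : A 0 0 * a + A 0 1 * b = a * A 0 0 + b * A 1 0 := by
    simpa [coe_quatJ, mul_apply, Fin.sum_univ_two] using congrFun₂ hJ' 0 0
  have hJ01 : A 0 0 * b - A 0 1 * a = a * A 0 1 + b * A 1 1 := by
    simpa [coe_quatJ, mul_apply, Fin.sum_univ_two, sub_eq_add_neg] using congrFun₂ hJ' 0 1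
  have h01 : A 0 1 = 0 := by
    have h : (2 : R) * A 0 1 = 0 := by
      linear_combination 2 * A 0 1 * hab - b * hJ00 + b ^ 2 * h10 + a * hJ01 - a * b * h11
    exact (mul_eq_zero.1 h).resolve_left two_ne_zero
  have hscalar : Matrix.scalar (Fin 2) (A 0 0) = A := by
    ext i j
    fin_cases i <;> fin_cases j <;> simp [h01, ← h10, ← h11]
  have hdet := A.det_coe
  rw [← hscalar, Matrix.scalar_apply, Matrix.det_diagonal, Finset.prod_const] at hdet
  exact mem_center_SL_two_iff.1 (Matrix.SpecialLinearGroup.mem_center_iff.2 ⟨A 0 0, hdet, hscalar⟩)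

/-- The image in `PSL(2, R)` of the quaternion group `{±1, ±i, ±j, ±ij}`, encoded as the centralizer
of the images of `i` and `j`; the two agree over a domain with `2 ≠ 0`, by `coe_quatFour`. -/
def quatFour : Subgroup PSL(2, R) :=
  Subgroup.centralizer {(quatI R : PSL(2, R)), (quatJ hab : PSL(2, R))}

theorem mem_quatFour_iff {g : PSL(2, R)} :
    g ∈ quatFour hab ↔ Commute g (quatI R) ∧ Commute g (quatJ hab) := by
  simp [quatFour, Subgroup.mem_centralizer_iff, Commute, SemiconjBy, eq_comm]

theorem mk_quatI_mul_self : (quatI R : PSL(2, R)) * quatI R = 1 := by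
  rw [← QuotientGroup.mk_mul, quatI_mul_self, mk_neg_PSL_two, QuotientGroup.mk_one]

theorem mk_quatJ_mul_self : (quatJ hab : PSL(2, R)) * quatJ hab = 1 := by
  rw [← QuotientGroup.mk_mul, quatJ_mul_self, mk_neg_PSL_two, QuotientGroup.mk_one]

theorem commute_mk_quatI_mk_quatJ : Commute (quatI R : PSL(2, R)) (quatJ hab) := by
  rw [Commute, SemiconjBy, ← QuotientGroup.mk_mul, (semiconjBy_quatI_quatJ hab).eq, neg_mul,
    mk_neg_PSL_two, QuotientGroup.mk_mul]

theorem mk_quatI_mem_quatFour : (quatI R : PSL(2, R)) ∈ quatFour hab :=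
  (mem_quatFour_iff hab).2 ⟨.refl _, commute_mk_quatI_mk_quatJ hab⟩

theorem mk_quatJ_mem_quatFour : (quatJ hab : PSL(2, R)) ∈ quatFour hab :=
  (mem_quatFour_iff hab).2 ⟨(commute_mk_quatI_mk_quatJ hab).symm, .refl _⟩

theorem centralizer_quatFour_le :
    Subgroup.centralizer (quatFour hab : Set PSL(2, R)) ≤ quatFour hab :=
  Subgroup.centralizer_le <|
    Set.pair_subset (mk_quatI_mem_quatFour hab) (mk_quatJ_mem_quatFour hab)

variable [IsDomain R] [NeZero (2 : R)]

theorem coe_quatFour : (quatFour hab : Set PSL(2, R)) =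
    {1, (quatI R : PSL(2, R)), (quatJ hab : PSL(2, R)),
      (quatI R : PSL(2, R)) * quatJ hab} := by
  apply Set.Subset.antisymm
  · intro g hg
    obtain ⟨A, rfl⟩ := QuotientGroup.mk_surjective g
    obtain ⟨hAI, hAJ⟩ := (mem_quatFour_iff hab).1 hg
    obtain ⟨k, hk, hkI, hkJ⟩ := exists_commute_mul_of_semiconjBy_neg (semiconjBy_quatI_quatJ hab)
      (commute_mk_PSL_two_iff.1 hAI) (commute_mk_PSL_two_iff.1 hAJ)
    have hAk : (A : PSL(2, R)) * k = 1 :=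
      mk_PSL_two_eq_iff.2 (eq_one_or_eq_neg_one_of_commute_quat hab hkI hkJ)
    have hIinv := inv_eq_of_mul_eq_one_left (mk_quatI_mul_self (R := R))
    have hJinv := inv_eq_of_mul_eq_one_left (mk_quatJ_mul_self hab)
    rw [eq_inv_of_mul_eq_one_left hAk]
    rcases hk with rfl | rfl | rfl | rfl
    · exact .inl (by rw [QuotientGroup.mk_one, inv_one])
    · exact .inr (.inl hIinv)
    · exact .inr (.inr (.inl hJinv))
    · refine .inr (.inr (.inr ?_))
      rw [QuotientGroup.mk_mul, (commute_mk_quatI_mk_quatJ hab).mul_inv, hIinv, hJinv]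
      rfl
  · rintro _ (rfl | rfl | rfl | rfl)
    exacts [Subgroup.one_mem _, mk_quatI_mem_quatFour hab, mk_quatJ_mem_quatFour hab,
      Subgroup.mul_mem _ (mk_quatI_mem_quatFour hab) (mk_quatJ_mem_quatFour hab)]

theorem mk_quatI_ne_mk_quatJ : (quatI R : PSL(2, R)) ≠ quatJ hab :=
  mk_ne_mk_of_commute_of_not_commute (not_commute_quatI_quatJ hab) (.refl _)

theorem card_quatFour : Nat.card (quatFour hab) = 4 := by
  have hIJ := not_commute_quatI_quatJ hab
  refine card_eq_four_of_coe_eq (coe_quatFour hab) ?_ ?_ (mk_quatI_ne_mk_quatJ hab) fun h => ?_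
  · exact mk_ne_mk_of_commute_of_not_commute hIJ (.one_left _)
  · exact mk_ne_mk_of_commute_of_not_commute (mt Commute.symm hIJ) (.one_left _)
  · exact mk_quatI_ne_mk_quatJ hab
      (mul_right_cancel (h.trans (mk_quatJ_mul_self hab).symm))

end Quaternion

section Hurwitz

variable {F : Type*} [Field F] [NeZero (2 : F)] {a b : F} (hab : a ^ 2 + b ^ 2 = -1)

/-- The Hurwitz unit `-(1 + i + j + ij) / 2` as a matrix of determinant `1`; it is a primitive cube
root of unity. -/
def hurwitzUnit : SL(2, F) :=
  ⟨!![-(1 + a + b) / 2, -(1 + b - a) / 2; -(-1 + b - a) / 2, -(1 - a - b) / 2], by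
    have h2 : (2 : F) ≠ 0 := two_ne_zero
    rw [det_fin_two_of]; field_simp; linear_combination -2 * hab⟩

theorem coe_hurwitzUnit : (hurwitzUnit hab : Matrix (Fin 2) (Fin 2) F) =
    !![-(1 + a + b) / 2, -(1 + b - a) / 2; -(-1 + b - a) / 2, -(1 - a - b) / 2] := rfl

theorem semiconjBy_hurwitzUnit_quatI :
    SemiconjBy (hurwitzUnit hab) (quatI F) (quatJ hab) := by
  refine Subtype.ext ?_
  simp only [Matrix.SpecialLinearGroup.coe_mul, coe_quatI, coe_quatJ, coe_hurwitzUnit, mul_fin_two]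
  congrm !![?_, ?_; ?_, ?_] <;> grind [two_ne_zero (α := F)]

theorem semiconjBy_hurwitzUnit_quatJ :
    SemiconjBy (hurwitzUnit hab) (quatJ hab) (quatI F * quatJ hab) := by
  refine Subtype.ext ?_
  simp only [Matrix.SpecialLinearGroup.coe_mul, coe_quatI, coe_quatJ, coe_hurwitzUnit, mul_fin_two]
  congrm !![?_, ?_; ?_, ?_] <;> grind [two_ne_zero (α := F)]

theorem hurwitzUnit_pow_three : hurwitzUnit hab ^ 3 = 1 := by
  refine Subtype.ext ?_
  simp only [pow_three, Matrix.SpecialLinearGroup.coe_mul, coe_hurwitzUnit, mul_fin_two,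
    Matrix.SpecialLinearGroup.coe_one, one_fin_two]
  congrm !![?_, ?_; ?_, ?_] <;> grind [two_ne_zero (α := F)]

theorem three_dvd_card_normalizer_quatFour :
    3 ∣ Nat.card (Subgroup.normalizer (quatFour hab : Set PSL(2, F))) :=
  let π := QuotientGroup.mk' (Subgroup.center SL(2, F))
  three_dvd_card_normalizer (w := π (hurwitzUnit hab)) (coe_quatFour hab)
    (mk_quatI_ne_mk_quatJ hab)
    (by rw [← map_pow, hurwitzUnit_pow_three, map_one])
    ((semiconjBy_hurwitzUnit_quatI hab).map π) ((semiconjBy_hurwitzUnit_quatJ hab).map π)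

end Hurwitz

theorem stmt_11_general {F : Type*} [Field F] [Finite F]
    (hF : Nat.card F % 8 = 3 ∨ Nat.card F % 8 = 5) (P : Sylow 2 PSL(2, F)) :
    Nonempty (Subgroup.normalizer ((P : Subgroup PSL(2, F)) : Set PSL(2, F)) ≃*
      alternatingGroup (Fin 4)) := by
  have : NeZero (2 : F) := ⟨two_ne_zero_of_odd_card (Nat.odd_iff.2 (by omega))⟩
  obtain ⟨a, b, hab⟩ := exists_sq_add_sq_eq (-1 : F)
  exact nonempty_normalizer_sylow_mulEquiv_alternatingGroup (card_quatFour hab)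
    (centralizer_quatFour_le hab) (three_dvd_card_normalizer_quatFour hab)
    (not_eight_dvd_card_PSL_two hF) P

/-- For a prime `p ≡ 3, 5 (mod 8)` and a Sylow `2`-subgroup `P` of `PSL(2,p)`, the
normalizer of `P` in `PSL(2,p)` is isomorphic to the alternating group `A₄`. -/
theorem stmt_11 (p : ℕ) (hp : p.Prime) (hmod : p % 8 = 3 ∨ p % 8 = 5)
    (P : Sylow 2 PSL(2, ZMod p)) :
    Nonempty (Subgroup.normalizer ((P : Subgroup PSL(2, ZMod p)) : Set PSL(2, ZMod p)) ≃* alternatingGroup (Fin 4)) := by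
  have : Fact p.Prime := ⟨hp⟩
  exact stmt_11_general (by rwa [Nat.card_zmod]) P
end

section
/- Let G be a finite abelian group and H a subgroup of G. Write D_G = Hom(G, ℂˣ) and D_H = Hom(H, ℂˣ) for the character groups, and model the complex representation rings as the group rings R(G) = MonoidAlgebra ℤ D_G and R(H) = MonoidAlgebra ℤ D_H. Let ind : R(H) → R(G) be the ℤ-linear map sending each basis element χ ∈ D_H to the sum over all χ̄ ∈ D_G whose restriction to H equals χ. Let I_G ⊆ R(G) and I_H ⊆ R(H) be the augmentation ideals, i.e., the kernels of the ring homomorphisms to ℤ sending every group element of D_G (respectively D_H) to 1. Then for every n ≥ 0, ind maps I_H^n into I_G^n. -/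
/-!
Restriction of characters `D_G → D_H` is surjective, because `ℂˣ` is divisible, and it induces a
ring homomorphism `res : R(G) → R(H)` under which `I_H ^ n` is the image of `I_G ^ n`. The fibers
of restriction are the cosets of its kernel, whence the projection formula
`ind (res x) = x * ind 1`. An element of `I_H ^ n` is thus `res x` with `x ∈ I_G ^ n`, and
`ind (res x)` is a multiple of `x`.
-/

/-- The augmentation ideal of the monoid algebra `R[M]`: the kernel of the `R`-algebra homomorphism
to `R` sending every element of `M` to `1`. -/
noncomputable def augmentationIdeal (R M : Type*) [CommSemiring R] [Monoid M] :
    Ideal (MonoidAlgebra R M) :=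
  RingHom.ker (MonoidAlgebra.lift R R M 1)

section MapDomain

variable {R M N : Type*} [Monoid M] [Monoid N] {f : M →* N}

theorem mapDomainRingHom_surjective [Semiring R] (hf : Function.Surjective f) :
    Function.Surjective (MonoidAlgebra.mapDomainRingHom R f) := fun y ↦
  let ⟨x, hx⟩ := Finsupp.mapDomain_surjective hf y.coeff
  ⟨.ofCoeff x, MonoidAlgebra.ext hx⟩

theorem comap_augmentationIdeal [CommSemiring R] (f : M →* N) :
    (augmentationIdeal R N).comap (MonoidAlgebra.mapDomainRingHom R f) = augmentationIdeal R M := by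
  have augmentation_comp :
      (MonoidAlgebra.lift R R N 1 : MonoidAlgebra R N →+* R).comp
        (MonoidAlgebra.mapDomainRingHom R f) = MonoidAlgebra.lift R R M 1 := by
    ext <;> simp
  exact (RingHom.comap_ker _ _).trans (congrArg RingHom.ker augmentation_comp)

theorem map_augmentationIdeal [CommSemiring R] (hf : Function.Surjective f) :
    (augmentationIdeal R M).map (MonoidAlgebra.mapDomainRingHom R f) = augmentationIdeal R N := by
  rw [← comap_augmentationIdeal f,
    Ideal.map_comap_of_surjective _ (mapDomainRingHom_surjective hf)]

end MapDomain

section FiberSum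

variable {R A B : Type*} [CommSemiring R]

/-- `T : R[B] → R[A]` sends each element of `B` to the sum of its fiber under `f : A → B`. For `f`
the restriction of characters from `G` to `H`, this characterizes induction from `H` to `G`. The
`finsum` is meaningful for finite fibers only, being `0` over an infinite one. -/
def IsFiberSum (f : A → B) (T : MonoidAlgebra R B →ₗ[R] MonoidAlgebra R A) : Prop :=
  ∀ b, T (.single b 1) = ∑ᶠ a ∈ {a | f a = b}, .single a 1

theorem bijOn_mul_left_fiber [Group A] [Monoid B] (f : A →* B) (a : A) :
    Set.BijOn (a * ·) {c | f c = 1} {c | f c = f a} := by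
  refine ⟨fun c (hc : f c = 1) ↦ ?_, (mul_right_injective a).injOn, fun c (hc : f c = f a) ↦
    ⟨a⁻¹ * c, ?_, mul_inv_cancel_left a c⟩⟩
  · rw [Set.mem_ofPred, map_mul, hc, mul_one]
  · rw [Set.mem_ofPred, map_mul, hc, ← map_mul, inv_mul_cancel, map_one]

namespace IsFiberSum

theorem apply_mapDomain [Group A] [Monoid B] {f : A →* B} [Finite f.ker]
    {T : MonoidAlgebra R B →ₗ[R] MonoidAlgebra R A} (hT : IsFiberSum f T)
    (x : MonoidAlgebra R A) :
    T (MonoidAlgebra.mapDomainRingHom R f x) = x * T 1 := by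
  have finite_fiber_one : {a | f a = 1}.Finite := Set.toFinite (f.ker : Set A)
  have projection_single (a : A) : T (.single (f a) 1) = .single a 1 * T (.single 1 1) := by
    rw [hT, hT, mul_finsum_mem' _ _ finite_fiber_one]
    exact (finsum_mem_eq_of_bijOn _ (bijOn_mul_left_fiber f a) fun c _ ↦ by simp).symm
  suffices T ∘ₗ (MonoidAlgebra.mapDomainAlgHom R R f).toLinearMap =
      LinearMap.mulRight R (T 1) from LinearMap.congr_fun this x
  ext a : 2
  simpa [MonoidAlgebra.one_def] using projection_single a

theorem apply_mem_augmentationIdeal_pow [CommGroup A] [CommMonoid B] {f : A →* B} [Finite f.ker]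
    {T : MonoidAlgebra R B →ₗ[R] MonoidAlgebra R A} (hT : IsFiberSum f T)
    (hf : Function.Surjective f) {n : ℕ} {y : MonoidAlgebra R B}
    (hy : y ∈ augmentationIdeal R B ^ n) :
    T y ∈ augmentationIdeal R A ^ n := by
  rw [← map_augmentationIdeal hf, ← Ideal.map_pow,
    Ideal.mem_map_iff_of_surjective _ (mapDomainRingHom_surjective hf)] at hy
  obtain ⟨x, hx, rfl⟩ := hy
  rw [hT.apply_mapDomain]
  exact Ideal.mul_mem_right _ _ hx

end IsFiberSum

end FiberSum

section DomRestrict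

variable {G : Type*}

theorem domRestrictHom_surjective_of_pow_surjective [CommGroup G] (H : Subgroup G)
    {A : Type*} [CommGroup A]
    (hA : ∀ n : ℕ, n ≠ 0 → Function.Surjective fun a : A ↦ a ^ n) :
    Function.Surjective (MonoidHom.domRestrictHom H A) := by
  intro χ
  let : DivisibleBy (Additive A) ℕ := divisibleByOfSMulRightSurj _ _ (hA _)
  let : DivisibleBy (Additive A) ℤ := AddGroup.divisibleByIntOfDivisibleByNat _
  obtain ⟨ψ, hψ⟩ := (Module.Baer.of_divisible (Additive A)).extension_property_addMonoidHom
    H.subtype.toAdditive Subtype.val_injective χ.toAdditive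
  exact ⟨ψ.toMultiplicative, MonoidHom.ext fun h ↦ DFunLike.congr_fun hψ (.ofMul h)⟩

theorem units_pow_surjective_of_isAlgClosed (K : Type*) [Field K] [IsAlgClosed K] {n : ℕ}
    (hn : n ≠ 0) :
    Function.Surjective fun u : Kˣ ↦ u ^ n := by
  intro u
  obtain ⟨z, hz⟩ := IsAlgClosed.exists_pow_nat_eq (u : K) (Nat.pos_of_ne_zero hn)
  have hz_unit : IsUnit z := (isUnit_pow_iff hn).1 (hz ▸ u.isUnit)
  exact ⟨hz_unit.unit, Units.ext hz⟩

theorem finite_ker_domRestrictHom [Group G] (H : Subgroup G) [H.Normal] [H.FiniteIndex]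
    (K : Type*) [CommRing K] [IsDomain K] :
    Finite (MonoidHom.domRestrictHom H Kˣ).ker :=
  .of_equiv _ (MonoidHom.domRestrictHomKerEquiv Kˣ H).symm.toEquiv

end DomRestrict

theorem stmt_17_general {R K G : Type*} [CommSemiring R] [Field K] [IsAlgClosed K] [CommGroup G]
    (H : Subgroup G) [H.FiniteIndex]
    {ind : MonoidAlgebra R (H →* Kˣ) →ₗ[R] MonoidAlgebra R (G →* Kˣ)}
    (hind : IsFiberSum (fun χ : G →* Kˣ ↦ χ.comp H.subtype) ind)
    {n : ℕ} {a : MonoidAlgebra R (H →* Kˣ)} (ha : a ∈ augmentationIdeal R (H →* Kˣ) ^ n) :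
    ind a ∈ augmentationIdeal R (G →* Kˣ) ^ n :=
  have := finite_ker_domRestrictHom H K
  have hsurj : Function.Surjective (MonoidHom.domRestrictHom H Kˣ) :=
    domRestrictHom_surjective_of_pow_surjective H fun _ ↦ units_pow_surjective_of_isAlgClosed K
  IsFiberSum.apply_mem_augmentationIdeal_pow hind hsurj ha

/-- For a finite abelian group `G` with subgroup `H`, model `R(G)` and `R(H)` as the
group rings `ℤ[Hom(G,ℂˣ)]` and `ℤ[Hom(H,ℂˣ)]`. The induction map `ind`, sending a
character `χ` of `H` to the sum of all characters of `G` restricting to `χ`, maps the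
`n`-th power of the augmentation ideal of `R(H)` into the `n`-th power of the
augmentation ideal of `R(G)`. -/
theorem stmt_17 (G : Type*) [CommGroup G] [Fintype G] (H : Subgroup G)
    (ind : MonoidAlgebra ℤ (↥H →* ℂˣ) →ₗ[ℤ] MonoidAlgebra ℤ (G →* ℂˣ))
    (hind : ∀ χ : ↥H →* ℂˣ,
      ind (MonoidAlgebra.single χ 1) =
        ∑ᶠ χ' ∈ {χ' : G →* ℂˣ | χ'.comp H.subtype = χ}, MonoidAlgebra.single χ' 1)
    (IG : Ideal (MonoidAlgebra ℤ (G →* ℂˣ)))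
    (hIG : IG = RingHom.ker ((MonoidAlgebra.lift ℤ ℤ (G →* ℂˣ)) 1))
    (IH : Ideal (MonoidAlgebra ℤ (↥H →* ℂˣ)))
    (hIH : IH = RingHom.ker ((MonoidAlgebra.lift ℤ ℤ (↥H →* ℂˣ)) 1))
    (n : ℕ) (a : MonoidAlgebra ℤ (↥H →* ℂˣ)) (ha : a ∈ IH ^ n) :
    ind a ∈ IG ^ n := by
  subst hIG hIH
  exact stmt_17_general H hind ha
end
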